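/- Let $X \geq 2$, $l \geq 0$ be integers, $\eta > 0$, and let $F(\boldsymbol{x}) = x_1^2 + x_2^2 + x_3^2$. Then the tail sum $S_2 = \sum_{k > X^{\eta}} \sum_{\substack{\boldsymbol{m}, \boldsymbol{n} \in \mathbf{Z}^3 \\ |\boldsymbol{m}|^2 \leq 2(X+l),\, |\boldsymbol{n}|^2 \leq 2X \\ k^2 \mid F(\boldsymbol{n}) \\ F(\boldsymbol{m}) - F(\boldsymbol{n}) = l}} 1$ satisfies $S_2 \ll_\varepsilon X^{3/2 - \eta} (X+l)^{1/2 + \varepsilon}$ for every $\varepsilon > 0$. -/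

import Mathlib

open Finset

/-- The sum of three squares form. -/
def F3 (x : Fin 3 → ℤ) : ℤ := x 0 ^ 2 + x 1 ^ 2 + x 2 ^ 2

/-!
For fixed `n`, the vectors `m` with `F(m) = F(n) + l` number `≪ (X + l)^(1/2 + ε)`: fixing `m₀`
leaves the representations of an integer as a sum of two squares, that is, the Gaussian integers
of a given norm, of which there are at most four times as many as divisors. Grouping the `n` by
the value of `F(n)`, a nonzero multiple of `k²` up to `2X`, the same bound leaves
`≪ X^(3/2 + ε) / k²` vectors `n`. Summing `1 / k²` over `k > X^η` gains the factor `X^(-η)`, and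
the spare `X^ε` is absorbed into `(X + l)^ε`.
-/

lemma cast_card_le_card_mul_of_fiber_le {α β R : Type*} [DecidableEq β]
    [Semiring R] [PartialOrder R] [IsOrderedRing R] {s : Finset α} {t : Finset β} {f : α → β}
    (hf : Set.MapsTo f s t) {b : R} (hfiber : ∀ y ∈ t, (#{x ∈ s | f x = y} : R) ≤ b) :
    (#s : R) ≤ #t * b := by
  rw [card_eq_sum_card_fiberwise hf, Nat.cast_sum, ← nsmul_eq_mul]
  exact sum_le_card_nsmul _ _ _ hfiber

lemma sum_inv_sq_le_two_div {Y : ℝ} (hY : 0 < Y) {s : Finset ℕ} (hs : ∀ k ∈ s, Y < k) :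
    ∑ k ∈ s, ((k : ℝ) ^ 2)⁻¹ ≤ 2 / Y := by
  have hsub : s ⊆ Ioo ⌊Y⌋₊ (s.sup id + 1) := fun k hk ↦
    mem_Ioo.2 ⟨(Nat.floor_lt hY.le).2 (hs k hk), Nat.lt_succ_of_le (le_sup (f := id) hk)⟩
  calc ∑ k ∈ s, ((k : ℝ) ^ 2)⁻¹
      ≤ ∑ k ∈ Ioo ⌊Y⌋₊ (s.sup id + 1), ((k : ℝ) ^ 2)⁻¹ :=
        sum_le_sum_of_subset_of_nonneg hsub fun _ _ _ ↦ by positivity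
    _ ≤ 2 / (⌊Y⌋₊ + 1) := sum_Ioo_inv_sq_le _ _
    _ ≤ 2 / Y := by
        gcongr
        exact (Nat.lt_floor_add_one Y).le

lemma add_one_le_max_mul_pow {t : ℝ} (ht : 1 < t) (a : ℕ) :
    (a : ℝ) + 1 ≤ max 1 (t - 1)⁻¹ * t ^ a := by
  have hone : 1 ≤ max 1 (t - 1)⁻¹ * (t - 1) := by
    rw [← div_le_iff₀ (sub_pos.2 ht), one_div]
    exact le_max_right _ _
  calc (a : ℝ) + 1 = a * 1 + 1 := by ring
    _ ≤ a * (max 1 (t - 1)⁻¹ * (t - 1)) + max 1 (t - 1)⁻¹ := by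
        gcongr
        exact le_max_left _ _
    _ = max 1 (t - 1)⁻¹ * (1 + a * (t - 1)) := by ring
    _ ≤ max 1 (t - 1)⁻¹ * t ^ a := by
        gcongr
        exact one_add_mul_sub_le_pow (by linarith) a

lemma rpow_eq_prod_primeFactors {n : ℕ} (hn : n ≠ 0) (ε : ℝ) :
    (n : ℝ) ^ ε = ∏ p ∈ n.primeFactors, ((p : ℝ) ^ ε) ^ n.factorization p := by
  conv_lhs => rw [← Nat.prod_factorization_pow_eq_self hn, Finsupp.prod, Nat.cast_prod]
  rw [← Real.finsetProd_rpow _ _ fun _ _ ↦ Nat.cast_nonneg _]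
  exact prod_congr rfl fun p _ ↦ by rw [Nat.cast_pow, Real.rpow_pow_comm p.cast_nonneg]

theorem exists_card_divisors_le_mul_rpow {ε : ℝ} (hε : 0 < ε) :
    ∃ C : ℝ, 0 < C ∧ ∀ n : ℕ, n ≠ 0 → (#n.divisors : ℝ) ≤ C * (n : ℝ) ^ ε := by
  set c : ℕ → ℝ := fun p ↦ max 1 ((p : ℝ) ^ ε - 1)⁻¹
  set P : ℕ := ⌈(2 : ℝ) ^ ε⁻¹⌉₊
  have one_le_c (p : ℕ) : 1 ≤ c p := le_max_left _ _
  have c_eq_one {p : ℕ} (hp : P ≤ p) : c p = 1 := by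
    have htwo : (2 : ℝ) ≤ (p : ℝ) ^ ε :=
      (Real.rpow_inv_le_iff_of_pos two_pos.le p.cast_nonneg hε).1 (Nat.ceil_le.1 hp)
    exact max_eq_left (inv_le_one_of_one_le₀ (by linarith))
  have prod_c_le (s : Finset ℕ) : ∏ p ∈ s, c p ≤ ∏ p ∈ range P, c p := by
    calc ∏ p ∈ s, c p ≤ ∏ p ∈ range P ∪ s, c p :=
          prod_mono_set_of_one_le one_le_c subset_union_right
      _ = ∏ p ∈ range P, c p := (prod_subset subset_union_left fun p _ hp ↦
          c_eq_one (not_lt.1 (mt mem_range.2 hp))).symm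
  refine ⟨∏ p ∈ range P, c p, prod_pos fun p _ ↦ one_pos.trans_le (one_le_c p), fun n hn ↦ ?_⟩
  calc (#n.divisors : ℝ) = ∏ p ∈ n.primeFactors, ((n.factorization p : ℝ) + 1) := by
        rw [Nat.card_divisors hn]
        push_cast
        rfl
    _ ≤ ∏ p ∈ n.primeFactors, (c p * ((p : ℝ) ^ ε) ^ n.factorization p) :=
        prod_le_prod (fun _ _ ↦ by positivity) fun p hp ↦ add_one_le_max_mul_pow
          (Real.one_lt_rpow (mod_cast (Nat.prime_of_mem_primeFactors hp).one_lt) hε) _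
    _ = (∏ p ∈ n.primeFactors, c p) * (n : ℝ) ^ ε := by
        rw [prod_mul_distrib, rpow_eq_prod_primeFactors hn]
    _ ≤ (∏ p ∈ range P, c p) * (n : ℝ) ^ ε := by
        exact mul_le_mul_of_nonneg_right (prod_c_le _) (by positivity)

lemma dvd_or_star_dvd_of_dvd_norm {d : ℤ} {π z : ℤ√d} (hπ : Prime π)
    (h : π ∣ (z.norm : ℤ√d)) : π ∣ z ∨ star π ∣ z := by
  rw [Zsqrtd.norm_eq_mul_conj] at h
  exact (hπ.dvd_or_dvd h).imp_right fun h ↦ by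
    simpa only [starRingEnd_apply, star_star] using map_dvd (starRingEnd (ℤ√d)) h

lemma ne_zero_of_norm_eq_pow {d : ℤ} {π : ℤ√d} (hπ : Prime π) {x : ℤ} {f : ℕ}
    (hnorm : π.norm = x ^ f) : f ≠ 0 := by
  rintro rfl
  exact hπ.not_isUnit (Zsqrtd.norm_eq_one_iff.1 (by simp [hnorm]))

/-- Stated with `f` so that it covers inert primes (`f = 2`) together with split and ramified
ones (`f = 1`). -/
lemma exists_eq_pow_mul_star_pow_mul {d : ℤ} {π : ℤ√d} (hπ : Prime π) {p f : ℕ} (hp : p.Prime)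
    (hnorm : π.norm = p ^ f) {M : ℤ} (hM : ¬ (p : ℤ) ∣ M) {a : ℕ} {z : ℤ√d}
    (hz : z.norm = p ^ a * M) :
    ∃ b c : ℕ, ∃ w : ℤ√d, f * (b + c) = a ∧ w.norm = M ∧ z = π ^ b * star π ^ c * w := by
  have hf : f ≠ 0 := ne_zero_of_norm_eq_pow hπ hnorm
  have hπp : π ∣ (p : ℤ√d) := by
    refine hπ.dvd_of_dvd_pow (n := f) ⟨star π, ?_⟩
    rw [← Zsqrtd.norm_eq_mul_conj, hnorm]
    push_cast
    rfl
  have hp0 : (p : ℤ) ≠ 0 := mod_cast hp.ne_zero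
  induction a using Nat.strong_induction_on generalizing z with
  | _ a ih =>
    rcases eq_or_ne a 0 with rfl | ha
    · exact ⟨0, 0, z, by simp, by simpa using hz, by simp⟩
    have descend {y : ℤ√d} (hy : (p : ℤ) ^ f * y.norm = p ^ a * M) :
        f ≤ a ∧ ∃ b c : ℕ, ∃ w : ℤ√d,
          f * (b + c) = a - f ∧ w.norm = M ∧ y = π ^ b * star π ^ c * w := by
      have hfa : f ≤ a := by
        have hdvd : (p : ℤ) ^ f ∣ p ^ a :=
          (((Nat.prime_iff_prime_int.1 hp).coprime_iff_not_dvd.2 hM).pow_left).dvd_of_dvd_mul_right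
            (Dvd.intro _ hy)
        exact (Nat.pow_dvd_pow_iff_le_right hp.one_lt).1 (mod_cast hdvd)
      refine ⟨hfa, ih (a - f) (by omega) (mul_left_cancel₀ (pow_ne_zero f hp0) ?_)⟩
      rw [hy, ← mul_assoc, ← pow_add, Nat.add_sub_cancel' hfa]
    have hdvd : π ∣ (z.norm : ℤ√d) := by
      rw [hz]
      push_cast
      exact (hπp.trans (dvd_pow_self _ ha)).mul_right _
    rcases dvd_or_star_dvd_of_dvd_norm hπ hdvd with ⟨y, rfl⟩ | ⟨y, rfl⟩
    · rw [Zsqrtd.norm_mul, hnorm] at hz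
      obtain ⟨hfa, b, c, w, hbc, hw, rfl⟩ := descend hz
      exact ⟨b + 1, c, w, by rw [add_right_comm, mul_add_one]; omega, hw, by ring⟩
    · rw [Zsqrtd.norm_mul, Zsqrtd.norm_conj, hnorm] at hz
      obtain ⟨hfa, b, c, w, hbc, hw, rfl⟩ := descend hz
      exact ⟨b, c + 1, w, by rw [← add_assoc, mul_add_one]; omega, hw, by ring⟩

lemma exists_prime_norm_eq_prime_pow {p : ℕ} (hp : p.Prime) :
    ∃ (π : GaussianInt) (f : ℕ), Prime π ∧ π.norm = p ^ f := by
  have hunit : ¬ IsUnit (p : GaussianInt) := by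
    rw [← Zsqrtd.norm_eq_one_iff, Zsqrtd.norm_natCast]
    simpa [Int.natAbs_mul] using hp.ne_one
  obtain ⟨π, hπ, hdvd⟩ :=
    WfDvdMonoid.exists_irreducible_factor hunit (mod_cast hp.ne_zero)
  have hnorm : π.norm.natAbs ∣ p ^ 2 := by
    have hdvd_sq : π.norm ∣ (p : ℤ) * p := by
      rw [← Zsqrtd.norm_natCast]
      exact map_dvd Zsqrtd.normMonoidHom hdvd
    simpa [sq, Int.natAbs_mul] using Int.natAbs_dvd_natAbs.2 hdvd_sq
  obtain ⟨f, -, hf⟩ := (Nat.dvd_prime_pow hp).1 hnorm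
  refine ⟨π, f, hπ.prime, ?_⟩
  rw [← GaussianInt.abs_natCast_norm, hf, Nat.cast_pow]

lemma encard_norm_eq_prime_pow_mul_le {p : ℕ} (hp : p.Prime) (a : ℕ) {M : ℤ}
    (hM : ¬ (p : ℤ) ∣ M) :
    {z : GaussianInt | z.norm = p ^ a * M}.encard ≤
      (a + 1) * {z : GaussianInt | z.norm = M}.encard := by
  obtain ⟨π, f, hπ, hnorm⟩ := exists_prime_norm_eq_prime_pow hp
  have hf : f ≠ 0 := ne_zero_of_norm_eq_pow hπ hnorm
  set g : ℕ → GaussianInt → GaussianInt := fun b w ↦ π ^ b * star π ^ (a / f - b) * w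
  have hsub : {z : GaussianInt | z.norm = p ^ a * M} ⊆
      ⋃ b ∈ range (a + 1), g b '' {w | w.norm = M} := by
    intro z hz
    obtain ⟨b, c, w, rfl, hw, rfl⟩ := exists_eq_pow_mul_star_pow_mul hπ hp hnorm hM hz
    have hb : b < f * (b + c) + 1 := by nlinarith [Nat.pos_of_ne_zero hf]
    refine Set.mem_biUnion (mem_range.2 hb) ⟨w, hw, ?_⟩
    simp only [g, Nat.mul_div_cancel_left _ (Nat.pos_of_ne_zero hf), Nat.add_sub_cancel_left]
  calc {z : GaussianInt | z.norm = p ^ a * M}.encard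
      ≤ ∑ b ∈ range (a + 1), (g b '' {w | w.norm = M}).encard :=
        (Set.encard_le_encard hsub).trans (set_encard_biUnion_le _ _)
    _ ≤ ∑ _b ∈ range (a + 1), {w : GaussianInt | w.norm = M}.encard :=
        sum_le_sum fun b _ ↦ Set.encard_image_le _ _
    _ = (a + 1) * {w : GaussianInt | w.norm = M}.encard := by simp

lemma encard_norm_eq_one_le : {z : GaussianInt | z.norm = 1}.encard ≤ 4 := by
  have hsub : {z : GaussianInt | z.norm = 1} ⊆
      (({⟨1, 0⟩, ⟨-1, 0⟩, ⟨0, 1⟩, ⟨0, -1⟩} : Finset GaussianInt) : Set GaussianInt) := by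
    rintro ⟨x, y⟩ (hxy : x * x - -1 * y * y = 1)
    have hx : |x| ≤ 1 := abs_le_one_iff_mul_self_le_one.2 (by linarith [mul_self_nonneg y])
    have hy : |y| ≤ 1 := abs_le_one_iff_mul_self_le_one.2 (by linarith [mul_self_nonneg x])
    obtain ⟨hx₁, hx₂⟩ := abs_le.1 hx
    obtain ⟨hy₁, hy₂⟩ := abs_le.1 hy
    interval_cases x <;> interval_cases y <;> simp_all
  refine (Set.encard_le_encard hsub).trans ?_
  rw [Set.encard_coe_eq_coe_finsetCard]
  exact mod_cast card_le_four

theorem encard_norm_eq_le_four_mul_card_divisors {N : ℕ} (hN : N ≠ 0) :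
    {z : GaussianInt | z.norm = N}.encard ≤ 4 * #N.divisors := by
  induction N using Nat.recOnPrimePow with
  | zero => exact (hN rfl).elim
  | one => simpa using encard_norm_eq_one_le
  | prime_pow_mul M p a hp hpM _ ih =>
    have hcop : (p ^ a).Coprime M := ((Nat.Prime.coprime_iff_not_dvd hp).2 hpM).pow_left a
    have hpow : #(p ^ a).divisors = a + 1 := by simp [Nat.divisors_prime_pow hp]
    rw [hcop.card_divisors_mul, hpow]
    calc {z : GaussianInt | z.norm = (p ^ a * M : ℕ)}.encard
        ≤ (a + 1) * {z : GaussianInt | z.norm = M}.encard := by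
          simpa using encard_norm_eq_prime_pow_mul_le hp a (M := M) (mod_cast hpM)
      _ ≤ (a + 1) * (4 * #M.divisors) := by
          gcongr
          exact ih (right_ne_zero_of_mul hN)
      _ = 4 * ((a + 1) * #M.divisors : ℕ) := by
          push_cast
          ring

theorem exists_card_norm_eq_le_mul_rpow {ε : ℝ} (hε : 0 < ε) :
    ∃ C : ℝ, 0 < C ∧ ∀ B : ℝ, 1 ≤ B → ∀ N : ℤ, N ≤ B →
      ∀ T : Finset GaussianInt, (∀ z ∈ T, z.norm = N) → (#T : ℝ) ≤ C * B ^ ε := by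
  obtain ⟨C, hC, hdiv⟩ := exists_card_divisors_le_mul_rpow hε
  refine ⟨max 1 (4 * C), by positivity, fun B hB N hNB T hT ↦ ?_⟩
  rcases T.eq_empty_or_nonempty with rfl | ⟨z₀, hz₀⟩
  · rw [card_empty, Nat.cast_zero]
    positivity
  lift N to ℕ using hT z₀ hz₀ ▸ GaussianInt.norm_nonneg z₀
  rcases eq_or_ne N 0 with rfl | hN
  · have hT0 : T ⊆ {0} := fun z hz ↦ mem_singleton.2 (GaussianInt.norm_eq_zero.1 (hT z hz))
    calc (#T : ℝ) ≤ 1 := mod_cast card_le_card hT0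
      _ ≤ max 1 (4 * C) * B ^ ε :=
        one_le_mul_of_one_le_of_one_le (le_max_left _ _) (Real.one_le_rpow hB hε.le)
  · have hcard : #T ≤ 4 * #N.divisors := by
      have h := (Set.encard_le_encard (s := (T : Set GaussianInt)) hT).trans
        (encard_norm_eq_le_four_mul_card_divisors hN)
      rw [Set.encard_coe_eq_coe_finsetCard] at h
      exact_mod_cast h
    calc (#T : ℝ) ≤ 4 * #N.divisors := mod_cast hcard
      _ ≤ 4 * (C * (N : ℝ) ^ ε) := by gcongr; exact hdiv N hN
      _ ≤ 4 * (C * B ^ ε) := by gcongr; exact mod_cast hNB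
      _ = 4 * C * B ^ ε := by ring
      _ ≤ max 1 (4 * C) * B ^ ε := by gcongr; exact le_max_right _ _

lemma F3_pos {x : Fin 3 → ℤ} (hx : x ≠ 0) : 0 < F3 x := by
  obtain ⟨i, hi⟩ := Function.ne_iff.1 hx
  have hi : 0 < x i ^ 2 := sq_pos_of_ne_zero hi
  unfold F3
  fin_cases i <;> positivity

lemma cast_card_Icc_neg_floor_le {R : ℝ} (hR : 1 ≤ R) :
    (#(Icc (-(⌊R⌋₊ : ℤ)) ⌊R⌋₊) : ℝ) ≤ 3 * R := by
  have hcard : #(Icc (-(⌊R⌋₊ : ℤ)) ⌊R⌋₊) = 2 * ⌊R⌋₊ + 1 := by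
    rw [Int.card_Icc]
    omega
  rw [hcard]
  push_cast
  linarith [Nat.floor_le (zero_le_one.trans hR)]

theorem exists_card_F3_eq_le_mul_rpow {ε : ℝ} (hε : 0 < ε) :
    ∃ C : ℝ, 0 < C ∧ ∀ B : ℝ, 1 ≤ B → ∀ N : ℤ, N ≤ B →
      ∀ T : Finset (Fin 3 → ℤ), (∀ x ∈ T, F3 x = N) → (#T : ℝ) ≤ C * B ^ (1 / 2 + ε) := by
  obtain ⟨C, hC, htwo⟩ := exists_card_norm_eq_le_mul_rpow hε
  refine ⟨3 * C, by positivity, fun B hB N hNB T hT ↦ ?_⟩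
  have hfirst : Set.MapsTo (fun x : Fin 3 → ℤ ↦ x 0) T (Icc (-(⌊√B⌋₊ : ℤ)) ⌊√B⌋₊) := by
    intro x hx
    have hsq : ((x 0 : ℝ)) ^ 2 ≤ B := by
      have : x 0 ^ 2 ≤ N := by
        rw [← hT x hx, F3]
        linarith [sq_nonneg (x 1), sq_nonneg (x 2)]
      exact le_trans (mod_cast this) hNB
    have habs : (x 0).natAbs ≤ ⌊√B⌋₊ :=
      Nat.le_floor (by simpa [Nat.cast_natAbs] using Real.abs_le_sqrt hsq)
    simp only [coe_Icc, Set.mem_Icc]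
    omega
  have hfiber : ∀ y ∈ Icc (-(⌊√B⌋₊ : ℤ)) ⌊√B⌋₊, (#{x ∈ T | x 0 = y} : ℝ) ≤ C * B ^ ε := by
    intro y _
    have hinj : Set.InjOn (fun x : Fin 3 → ℤ ↦ (⟨x 1, x 2⟩ : GaussianInt))
        ({x ∈ T | x 0 = y} : Finset (Fin 3 → ℤ)) := by
      intro x hx x' hx' h
      obtain ⟨h₁, h₂⟩ := Zsqrtd.ext_iff.1 h
      have h₀ : x 0 = x' 0 := (mem_filter.1 hx).2.trans (mem_filter.1 hx').2.symm
      funext i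
      fin_cases i <;> assumption
    rw [← card_image_of_injOn hinj]
    have hN : ((N - y ^ 2 : ℤ) : ℝ) ≤ B := by
      push_cast
      linarith [sq_nonneg (y : ℝ)]
    refine htwo B hB (N - y ^ 2) hN _ fun z hz ↦ ?_
    obtain ⟨x, hx, rfl⟩ := mem_image.1 hz
    obtain ⟨hxT, rfl⟩ := mem_filter.1 hx
    rw [← hT x hxT, F3, Zsqrtd.norm_def]
    ring
  calc (#T : ℝ) ≤ #(Icc (-(⌊√B⌋₊ : ℤ)) ⌊√B⌋₊) * (C * B ^ ε) :=
        cast_card_le_card_mul_of_fiber_le hfirst hfiber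
    _ ≤ 3 * √B * (C * B ^ ε) := by
        gcongr
        exact cast_card_Icc_neg_floor_le (Real.one_le_sqrt.2 hB)
    _ = 3 * C * B ^ (1 / 2 + ε) := by
        rw [Real.rpow_add (by linarith), Real.sqrt_eq_rpow]
        ring

theorem exists_card_dvd_F3_le_mul_rpow_div {ε : ℝ} (hε : 0 < ε) :
    ∃ C : ℝ, 0 < C ∧ ∀ B : ℝ, 1 ≤ B → ∀ (d : ℕ) (T : Finset (Fin 3 → ℤ)),
      (∀ x ∈ T, x ≠ 0 ∧ F3 x ≤ B ∧ (d : ℤ) ∣ F3 x) → (#T : ℝ) ≤ C * B ^ (3 / 2 + ε) / d := by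
  obtain ⟨C, hC, hthree⟩ := exists_card_F3_eq_le_mul_rpow hε
  refine ⟨C, hC, fun B hB d T hT ↦ ?_⟩
  have hvalue : Set.MapsTo (fun x ↦ (F3 x).natAbs) T ({n ∈ Ioc 0 ⌊B⌋₊ | d ∣ n} : Finset ℕ) := by
    intro x hx
    obtain ⟨hne, hle, hdvd⟩ := hT x hx
    have hpos := F3_pos hne
    have hcast : ((F3 x).natAbs : ℝ) = F3 x := by
      rw [Nat.cast_natAbs, abs_of_pos hpos]
    simp only [coe_filter, Set.mem_ofPred_eq, mem_Ioc]
    exact ⟨⟨Int.natAbs_pos.2 hpos.ne', Nat.le_floor (hcast ▸ hle)⟩, Int.natCast_dvd.1 hdvd⟩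
  have hfiber : ∀ n ∈ ({n ∈ Ioc 0 ⌊B⌋₊ | d ∣ n} : Finset ℕ),
      (#{x ∈ T | (F3 x).natAbs = n} : ℝ) ≤ C * B ^ (1 / 2 + ε) := by
    intro n hn
    have hnB : n ≤ ⌊B⌋₊ := (mem_Ioc.1 (mem_filter.1 hn).1).2
    refine hthree B hB n (mod_cast (Nat.le_floor_iff (by linarith)).1 hnB) _ fun x hx ↦ ?_
    obtain ⟨hxT, rfl⟩ := mem_filter.1 hx
    exact (Int.natAbs_of_nonneg (F3_pos (hT x hxT).1).le).symm
  calc (#T : ℝ) ≤ #{n ∈ Ioc 0 ⌊B⌋₊ | d ∣ n} * (C * B ^ (1 / 2 + ε)) :=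
        cast_card_le_card_mul_of_fiber_le hvalue hfiber
    _ ≤ B / d * (C * B ^ (1 / 2 + ε)) := by
        gcongr
        rw [Nat.Ioc_filter_dvd_card_eq_div]
        exact Nat.cast_div_le.trans (by gcongr; exact Nat.floor_le (by linarith))
    _ = C * B ^ (3 / 2 + ε) / d := by
        rw [show (3 / 2 + ε : ℝ) = 1 + (1 / 2 + ε) by ring, Real.rpow_add (by linarith) 1,
          Real.rpow_one]
        ring

theorem exists_card_F3_sub_eq_le_mul_rpow_div {ε : ℝ} (hε : 0 < ε) :
    ∃ C : ℝ, 0 < C ∧ ∀ A B : ℝ, 1 ≤ A → 1 ≤ B → ∀ (d : ℕ) (l : ℤ)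
      (T : Finset ((Fin 3 → ℤ) × (Fin 3 → ℤ))),
      (∀ p ∈ T, F3 p.1 ≤ B ∧ F3 p.2 ≤ A ∧ p.2 ≠ 0 ∧ (d : ℤ) ∣ F3 p.2 ∧
        F3 p.1 - F3 p.2 = l) →
      (#T : ℝ) ≤ C * A ^ (3 / 2 + ε) * B ^ (1 / 2 + ε) / d := by
  obtain ⟨C₁, hC₁, hfst⟩ := exists_card_F3_eq_le_mul_rpow hε
  obtain ⟨C₂, hC₂, hsnd⟩ := exists_card_dvd_F3_le_mul_rpow_div hε
  refine ⟨C₂ * C₁, by positivity, fun A B hA hB d l T hT ↦ ?_⟩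
  have himage : (#(T.image Prod.snd) : ℝ) ≤ C₂ * A ^ (3 / 2 + ε) / d := by
    refine hsnd A hA d _ fun x hx ↦ ?_
    obtain ⟨p, hp, rfl⟩ := mem_image.1 hx
    obtain ⟨-, hle, hne, hdvd, -⟩ := hT p hp
    exact ⟨hne, hle, hdvd⟩
  have hfiber : ∀ n ∈ T.image Prod.snd, (#{p ∈ T | p.2 = n} : ℝ) ≤ C₁ * B ^ (1 / 2 + ε) := by
    intro n hn
    have hinj : Set.InjOn (fun p : (Fin 3 → ℤ) × (Fin 3 → ℤ) ↦ p.1)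
        ({p ∈ T | p.2 = n} : Finset ((Fin 3 → ℤ) × (Fin 3 → ℤ))) := by
      intro p hp q hq h
      have hsnd : p.2 = q.2 := (mem_filter.1 hp).2.trans (mem_filter.1 hq).2.symm
      exact Prod.ext h hsnd
    have hF3 : ∀ p ∈ T, p.2 = n → F3 p.1 = F3 n + l := by
      rintro p hp rfl
      linarith [(hT p hp).2.2.2.2]
    obtain ⟨p, hp, hpn⟩ := mem_image.1 hn
    rw [← card_image_of_injOn hinj]
    refine hfst B hB (F3 n + l) (hF3 p hp hpn ▸ (hT p hp).1) _ fun m hm ↦ ?_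
    obtain ⟨q, hq, rfl⟩ := mem_image.1 hm
    exact hF3 q (mem_filter.1 hq).1 (mem_filter.1 hq).2
  calc (#T : ℝ) ≤ #(T.image Prod.snd) * (C₁ * B ^ (1 / 2 + ε)) :=
        cast_card_le_card_mul_of_fiber_le (fun _ ↦ mem_image_of_mem _) hfiber
    _ ≤ C₂ * A ^ (3 / 2 + ε) / d * (C₁ * B ^ (1 / 2 + ε)) := by gcongr
    _ = C₂ * C₁ * A ^ (3 / 2 + ε) * B ^ (1 / 2 + ε) / d := by ring

/-- The pairs `(m, n)` counted by the `k`-th term of `S₂`. The boxes only make the set finite: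
they already contain every `m` with `F(m) ≤ 2(X + l)` and every `n` with `F(n) ≤ 2X`. -/
noncomputable def truncatedPairs (X l k : ℕ) : Finset ((Fin 3 → ℤ) × (Fin 3 → ℤ)) :=
  {p ∈ Fintype.piFinset (fun _ : Fin 3 ↦ Icc (-(2 * ((X : ℤ) + l))) (2 * ((X : ℤ) + l))) ×ˢ
      Fintype.piFinset (fun _ : Fin 3 ↦ Icc (-(2 * (X : ℤ))) (2 * (X : ℤ))) |
    F3 p.1 ≤ 2 * ((X : ℤ) + l) ∧ F3 p.2 ≤ 2 * (X : ℤ) ∧ p.2 ≠ 0 ∧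
      (k : ℤ) ^ 2 ∣ F3 p.2 ∧ F3 p.1 - F3 p.2 = l}

theorem exists_card_truncatedPairs_le {ε : ℝ} (hε : 0 < ε) :
    ∃ C : ℝ, 0 < C ∧ ∀ X l k : ℕ, 0 < X →
      (#(truncatedPairs X l k) : ℝ) ≤
        C * (X : ℝ) ^ ((3 : ℝ) / 2) * ((X : ℝ) + l) ^ (1 / 2 + ε) * ((k : ℝ) ^ 2)⁻¹ := by
  obtain ⟨C, hC, hpairs⟩ := exists_card_F3_sub_eq_le_mul_rpow_div (half_pos hε)
  refine ⟨C * 2 ^ (3 / 2 + ε / 2) * 2 ^ (1 / 2 + ε / 2), by positivity, fun X l k hX ↦ ?_⟩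
  have hX1 : (1 : ℝ) ≤ X := mod_cast hX
  have := l.cast_nonneg (α := ℝ)
  have hmem : ∀ p ∈ truncatedPairs X l k, F3 p.1 ≤ 2 * ((X : ℝ) + l) ∧ F3 p.2 ≤ 2 * (X : ℝ) ∧
      p.2 ≠ 0 ∧ ((k ^ 2 : ℕ) : ℤ) ∣ F3 p.2 ∧ F3 p.1 - F3 p.2 = l :=
    fun p hp ↦ mod_cast (mem_filter.1 hp).2
  calc (#(truncatedPairs X l k) : ℝ)
      ≤ C * (2 * (X : ℝ)) ^ (3 / 2 + ε / 2) * (2 * ((X : ℝ) + l)) ^ (1 / 2 + ε / 2) /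
          (k ^ 2 : ℕ) := hpairs _ _ (by linarith) (by linarith) _ _ _ hmem
    _ = C * 2 ^ (3 / 2 + ε / 2) * 2 ^ (1 / 2 + ε / 2) * (X : ℝ) ^ ((3 : ℝ) / 2) *
          ((X : ℝ) ^ (ε / 2) * ((X : ℝ) + l) ^ (1 / 2 + ε / 2)) * ((k : ℝ) ^ 2)⁻¹ := by
        rw [Real.mul_rpow two_pos.le (by linarith), Real.mul_rpow two_pos.le (by linarith),
          Real.rpow_add (x := (X : ℝ)) (by linarith), Nat.cast_pow]
        ring
    _ ≤ C * 2 ^ (3 / 2 + ε / 2) * 2 ^ (1 / 2 + ε / 2) * (X : ℝ) ^ ((3 : ℝ) / 2) *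
          (((X : ℝ) + l) ^ (ε / 2) * ((X : ℝ) + l) ^ (1 / 2 + ε / 2)) * ((k : ℝ) ^ 2)⁻¹ := by
        gcongr
        linarith
    _ = C * 2 ^ (3 / 2 + ε / 2) * 2 ^ (1 / 2 + ε / 2) * (X : ℝ) ^ ((3 : ℝ) / 2) *
          ((X : ℝ) + l) ^ (1 / 2 + ε) * ((k : ℝ) ^ 2)⁻¹ := by
        rw [← Real.rpow_add (by linarith), show ε / 2 + (1 / 2 + ε / 2) = 1 / 2 + ε by ring]

theorem stmt_12_general {ε : ℝ} (hε : 0 < ε) :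
    ∃ C : ℝ, 0 < C ∧ ∀ Y : ℝ, 0 < Y → ∀ s : Finset ℕ, (∀ k ∈ s, Y < k) → ∀ X l : ℕ, 0 < X →
      ∑ k ∈ s, (#(truncatedPairs X l k) : ℝ) ≤
        C * ((X : ℝ) ^ ((3 : ℝ) / 2) / Y) * ((X : ℝ) + l) ^ (1 / 2 + ε) := by
  obtain ⟨C, hC, hterm⟩ := exists_card_truncatedPairs_le hε
  refine ⟨2 * C, by positivity, fun Y hY s hs X l hX ↦ ?_⟩
  calc ∑ k ∈ s, (#(truncatedPairs X l k) : ℝ)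
      ≤ ∑ k ∈ s, C * (X : ℝ) ^ ((3 : ℝ) / 2) * ((X : ℝ) + l) ^ (1 / 2 + ε) * ((k : ℝ) ^ 2)⁻¹ :=
        sum_le_sum fun k _ ↦ hterm X l k hX
    _ ≤ C * (X : ℝ) ^ ((3 : ℝ) / 2) * ((X : ℝ) + l) ^ (1 / 2 + ε) * (2 / Y) := by
        rw [← mul_sum]
        gcongr
        exact sum_inv_sq_le_two_div hY hs
    _ = 2 * C * ((X : ℝ) ^ ((3 : ℝ) / 2) / Y) * ((X : ℝ) + l) ^ (1 / 2 + ε) := by ring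

/-- truncation estimate, Lemma 3.2: the tail sum
`S₂ = ∑_{k > X^η} #{(m,n) : |m|² ≤ 2(X+l), |n|² ≤ 2X, n ≠ 0, k² ∣ F(n), F(m) - F(n) = l}`
satisfies `S₂ ≪_ε X^{3/2-η}(X+l)^{1/2+ε}`. -/
theorem stmt_12 (η ε : ℝ) (hη : 0 < η) (hε : 0 < ε) :
    ∃ C : ℝ, 0 < C ∧ ∀ X l : ℕ, 2 ≤ X →
      (∑ k ∈ (Finset.Icc 1 (2 * X)).filter (fun k : ℕ => (X : ℝ) ^ η < (k : ℝ)),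
        ((((Fintype.piFinset (fun _ : Fin 3 => Finset.Icc (-(2 * ((X : ℤ) + l))) (2 * ((X : ℤ) + l)))) ×ˢ
            (Fintype.piFinset (fun _ : Fin 3 => Finset.Icc (-(2 * (X : ℤ))) (2 * (X : ℤ))))).filter
          (fun p => F3 p.1 ≤ 2 * ((X : ℤ) + l) ∧ F3 p.2 ≤ 2 * (X : ℤ) ∧ p.2 ≠ 0 ∧
            ((k : ℤ)) ^ 2 ∣ F3 p.2 ∧ F3 p.1 - F3 p.2 = l)).card : ℝ))
      ≤ C * (X : ℝ) ^ ((3:ℝ)/2 - η) * ((X : ℝ) + (l : ℝ)) ^ ((1:ℝ)/2 + ε) := by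
  obtain ⟨C, hC, htail⟩ := stmt_12_general hε
  refine ⟨C, hC, fun X l hX ↦ ?_⟩
  have hX0 : (0 : ℝ) < X := mod_cast two_pos.trans_le hX
  rw [Real.rpow_sub hX0]
  exact htail _ (by positivity) _ (fun k hk ↦ (mem_filter.1 hk).2) X l (two_pos.trans_le hX)
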